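/- arXiv:2103.15026 — 2 statements merged into one kernel-verified Lean document; each statement's English description precedes it below -/
import Mathlib

section
/- Let R be a division ring of characteristic p ≥ 0 and let σ ∈ Σ_n have cycle type λ = (λ_1, λ_2, …, λ_s) (with fixed points counted as parts equal to 1). Then the σ-invariant matrix ring S_n(σ,R) is a semisimple ring if and only if p does not divide λ_i for every 1 ≤ i ≤ s. -/
open Matrix

/-- The `σ`-invariant matrix ring `S_n(σ,R) = {a ∈ M_n(R) | a_{ij} = a_{σ(i)σ(j)}}`. -/
def invariantSubring (R : Type*) [Ring R] {n : ℕ} (σ : Equiv.Perm (Fin n)) :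
    Subring (Matrix (Fin n) (Fin n) R) where
  carrier := {a | ∀ i j, a i j = a (σ i) (σ j)}
  zero_mem' := fun i j => rfl
  one_mem' := fun i j => by
    simp [Matrix.one_apply, EmbeddingLike.apply_eq_iff_eq]
  add_mem' := fun {a b} ha hb i j => by
    simp only [Matrix.add_apply]; rw [ha i j, hb i j]
  neg_mem' := fun {a} ha i j => by
    simp only [Matrix.neg_apply]; rw [ha i j]
  mul_mem' := fun {a b} ha hb i j => by
    simp only [Matrix.mul_apply]
    calc ∑ k, a i k * b k j
        = ∑ k, a (σ i) (σ k) * b (σ k) (σ j) :=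
          Finset.sum_congr rfl fun k _ => by rw [← ha, ← hb]
      _ = ∑ k, a (σ i) k * b k (σ j) := Equiv.sum_comp σ fun k => a (σ i) k * b k (σ j)

/-- `σ ∈ Σ_n` has cycle type `(lam 0, …, lam (s-1))`, where fixed points are counted
as parts equal to `1`: the multiset of lengths of the disjoint cycles of `σ`, together
with one part `1` for each fixed point, is the multiset of values of `lam`. -/
def HasFullCycleType {n s : ℕ} (σ : Equiv.Perm (Fin n)) (lam : Fin s → ℕ) : Prop :=
  σ.cycleType + Multiset.replicate (n - σ.cycleType.sum) 1 = (List.ofFn lam : Multiset ℕ)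

theorem IsSemisimpleRing.exists_regular {S : Type*} [Ring S] [IsSemisimpleRing S] (x : S) :
    ∃ y, x * y * x = x := by
  obtain ⟨e, he, hI⟩ := IsSemisimpleRing.ideal_eq_span_idempotent (Ideal.span {x})
  have h1 : x ∈ Ideal.span {e} := hI ▸ Ideal.mem_span_singleton_self x
  have h2 : e ∈ Ideal.span {x} := hI ▸ Ideal.mem_span_singleton_self e
  obtain ⟨a, ha⟩ := Ideal.mem_span_singleton'.1 h1
  obtain ⟨y, hy⟩ := Ideal.mem_span_singleton'.1 h2
  refine ⟨y, ?_⟩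
  rw [mul_assoc, hy, ← ha, mul_assoc, he.eq]

theorem isSemisimpleRing_of_right_identity {S : Type*} [Ring S]
    (h : ∀ I : Ideal S, ∃ e ∈ I, ∀ x ∈ I, x * e = x) : IsSemisimpleRing S := by
  refine (isSemisimpleModule_iff S S).2 ⟨fun I => ?_⟩
  obtain ⟨e, he, hx⟩ := h I
  refine ⟨LinearMap.ker (LinearMap.toSpanSingleton S S e), ?_, ?_⟩
  · rw [Submodule.disjoint_def]
    intro x hxI hk
    rw [LinearMap.mem_ker, LinearMap.toSpanSingleton_apply, smul_eq_mul, hx x hxI] at hk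
    exact hk
  · rw [codisjoint_iff, Submodule.eq_top_iff']
    intro x
    refine Submodule.mem_sup.2 ⟨x * e, I.smul_mem x he, x - x * e, ?_, by abel⟩
    rw [LinearMap.mem_ker, LinearMap.toSpanSingleton_apply, smul_eq_mul, sub_mul, mul_assoc,
      hx e he, sub_self]

section Averaging

variable {R : Type*} [DivisionRing R] {n : ℕ} (σ : Equiv.Perm (Fin n))

theorem invariantSubring_zpow {a : Matrix (Fin n) (Fin n) R} (ha : a ∈ invariantSubring R σ)
    (g : Subgroup.zpowers σ) (i j : Fin n) : a (g.1 i) (g.1 j) = a i j := by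
  have hnat : ∀ (k : ℕ) (i j : Fin n), a ((σ ^ k) i) ((σ ^ k) j) = a i j := by
    intro k
    induction k with
    | zero => intro i j; rfl
    | succ k ih =>
      intro i j
      rw [pow_succ, Equiv.Perm.mul_apply, Equiv.Perm.mul_apply, ih]
      exact (ha i j).symm
  obtain ⟨g, hg⟩ := g
  obtain ⟨k, rfl⟩ := (isOfFinOrder_of_finite σ).mem_zpowers_iff_mem_range_orderOf.1 hg |>
    Finset.mem_image.1 |>.imp fun _ h => h.2
  exact hnat k i j

/-- Averaging over the group generated by `σ`. -/
noncomputable def avg (a : Matrix (Fin n) (Fin n) R) : Matrix (Fin n) (Fin n) R :=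
  fun i j => ((Nat.card (Subgroup.zpowers σ) : ℕ) : R)⁻¹ *
    ∑ g : Subgroup.zpowers σ, a (g.1 i) (g.1 j)

theorem avg_mem (a : Matrix (Fin n) (Fin n) R) : avg σ a ∈ invariantSubring R σ := by
  intro i j
  unfold avg
  congr 1
  exact (Equiv.sum_comp (Equiv.mulRight (⟨σ, Subgroup.mem_zpowers σ⟩ : Subgroup.zpowers σ))
    fun g : Subgroup.zpowers σ => a (g.1 i) (g.1 j)).symm

theorem avg_zero : avg σ (0 : Matrix (Fin n) (Fin n) R) = 0 := by
  ext i j; simp [avg]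

theorem avg_add (a b : Matrix (Fin n) (Fin n) R) : avg σ (a + b) = avg σ a + avg σ b := by
  ext i j; simp [avg, Finset.sum_add_distrib, mul_add]

theorem avg_of_mem (hN : ((Nat.card (Subgroup.zpowers σ) : ℕ) : R) ≠ 0)
    {a : Matrix (Fin n) (Fin n) R} (ha : a ∈ invariantSubring R σ) : avg σ a = a := by
  ext i j
  simp only [avg, invariantSubring_zpow σ ha, Finset.sum_const, Finset.card_univ, nsmul_eq_mul]
  rw [← Nat.card_eq_fintype_card, ← mul_assoc, inv_mul_cancel₀ hN, one_mul]

theorem avg_mul_right (t : Matrix (Fin n) (Fin n) R) {x : Matrix (Fin n) (Fin n) R}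
    (hx : x ∈ invariantSubring R σ) : avg σ (t * x) = avg σ t * x := by
  ext i j
  simp only [avg, Matrix.mul_apply, mul_assoc, Finset.sum_mul]
  rw [← Finset.mul_sum]
  congr 1
  conv_rhs => rw [Finset.sum_comm]
  refine Finset.sum_congr rfl fun g _ => ?_
  rw [← Equiv.sum_comp g.1]
  exact Finset.sum_congr rfl fun k _ => by rw [invariantSubring_zpow σ hx]

theorem avg_mul_left (t : Matrix (Fin n) (Fin n) R) {x : Matrix (Fin n) (Fin n) R}
    (hx : x ∈ invariantSubring R σ) : avg σ (x * t) = x * avg σ t := by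
  ext i j
  have hc : ∀ r : R, Commute r ((Nat.card (Subgroup.zpowers σ) : ℕ) : R)⁻¹ :=
    fun r => (Nat.cast_commute _ r).symm.inv_right₀
  simp only [avg, Matrix.mul_apply]
  have : ∀ k, x i k * (((Nat.card (Subgroup.zpowers σ) : ℕ) : R)⁻¹ *
      ∑ g : Subgroup.zpowers σ, t (g.1 k) (g.1 j)) =
      ((Nat.card (Subgroup.zpowers σ) : ℕ) : R)⁻¹ *
        ∑ g : Subgroup.zpowers σ, x i k * t (g.1 k) (g.1 j) := by
    intro k
    rw [← mul_assoc, (hc _).eq, mul_assoc, Finset.mul_sum]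
  simp only [this]
  rw [← Finset.mul_sum]
  congr 1
  conv_rhs => rw [Finset.sum_comm]
  refine Finset.sum_congr rfl fun g _ => ?_
  rw [← Equiv.sum_comp g.1]
  exact Finset.sum_congr rfl fun k _ => by rw [invariantSubring_zpow σ hx]

theorem invariantSubring_semisimple (hN : ((Nat.card (Subgroup.zpowers σ) : ℕ) : R) ≠ 0) :
    IsSemisimpleRing (invariantSubring R σ) := by
  refine isSemisimpleRing_of_right_identity fun I => ?_
  obtain ⟨e, he, hI⟩ := IsSemisimpleRing.ideal_eq_span_idempotent
    (Ideal.span ((fun x : invariantSubring R σ => x.1) '' (I : Set (invariantSubring R σ))))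
  have heI : e ∈ Ideal.span
      ((fun x : invariantSubring R σ => x.1) '' (I : Set (invariantSubring R σ))) :=
    hI ▸ Ideal.mem_span_singleton_self e
  have key : ∀ t ∈ Ideal.span
      ((fun x : invariantSubring R σ => x.1) '' (I : Set (invariantSubring R σ))),
      (⟨avg σ t, avg_mem σ t⟩ : invariantSubring R σ) ∈ I := by
    intro t ht
    induction ht using Submodule.closure_induction with
    | zero =>
      convert I.zero_mem
      exact avg_zero σ
    | add a b _ _ ha hb =>
      convert I.add_mem ha hb
      exact avg_add σ a b
    | smul_mem r x hx =>
      obtain ⟨x, hxI, rfl⟩ := hx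
      convert I.mul_mem_left ⟨avg σ r, avg_mem σ r⟩ hxI
      exact avg_mul_right σ r x.2
  refine ⟨⟨avg σ e, avg_mem σ e⟩, key e heI, fun x hx => Subtype.ext ?_⟩
  have hxe : x.1 * e = x.1 := by
    have : x.1 ∈ Ideal.span {e} := hI ▸ Ideal.subset_span ⟨x, hx, rfl⟩
    obtain ⟨a, ha⟩ := Ideal.mem_span_singleton'.1 this
    rw [← ha, mul_assoc, he.eq]
  change x.1 * avg σ e = x.1
  rw [← avg_mul_left σ e x.2, hxe, avg_of_mem σ hN x.2]

theorem invariantSubring_not_semisimple {c : Equiv.Perm (Fin n)} (hc : c ∈ σ.cycleFactorsFinset)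
    (h0 : ((c.support.card : ℕ) : R) = 0) : ¬ IsSemisimpleRing (invariantSubring R σ) := by
  intro hS
  obtain ⟨hcyc, hcσ⟩ := Equiv.Perm.mem_cycleFactorsFinset_iff.1 hc
  have hσ : ∀ i, σ i ∈ c.support ↔ i ∈ c.support := fun i =>
    Equiv.Perm.mem_cycleFactorsFinset_support hc i
  let x : invariantSubring R σ :=
    ⟨fun i j => if i ∈ c.support ∧ j ∈ c.support then 1 else 0, fun i j => by simp only [hσ]⟩
  obtain ⟨y, hy⟩ := IsSemisimpleRing.exists_regular x
  obtain ⟨a, ha⟩ := hcyc.nonempty_support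
  have hrow : ∀ k ∈ c.support, ∑ l ∈ c.support, y.1 (c k) l = ∑ l ∈ c.support, y.1 k l := by
    intro k hk
    symm
    refine Finset.sum_equiv c (fun i => Equiv.Perm.apply_mem_support.symm) fun l hl => ?_
    rw [hcσ k hk, hcσ l hl]
    exact y.2 k l
  have hconst : ∀ k ∈ c.support, ∑ l ∈ c.support, y.1 k l = ∑ l ∈ c.support, y.1 a l := by
    have hp : ∀ m : ℕ, ∑ l ∈ c.support, y.1 ((c ^ m) a) l = ∑ l ∈ c.support, y.1 a l := by
      intro m
      induction m with
      | zero => rfl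
      | succ m ih =>
        rw [pow_succ', Equiv.Perm.mul_apply, hrow _ (Equiv.Perm.pow_apply_mem_support.2 ha), ih]
    intro k hk
    obtain ⟨m, rfl⟩ := hcyc.exists_pow_eq (Equiv.Perm.mem_support.1 ha)
      (Equiv.Perm.mem_support.1 hk)
    exact hp m
  have h1 : (x.1 * y.1 * x.1) a a = x.1 a a := congrFun (congrFun (congrArg Subtype.val hy) a) a
  have h2 : (x.1 * y.1 * x.1) a a = ∑ k ∈ c.support, ∑ l ∈ c.support, y.1 k l := by
    have hx : ∀ i j, x.1 i j = if i ∈ c.support ∧ j ∈ c.support then 1 else 0 := fun _ _ => rfl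
    simp only [Matrix.mul_apply, hx, ha, true_and, and_true, ite_mul, mul_ite, one_mul, mul_one,
      zero_mul, mul_zero, Finset.sum_ite_mem, Finset.univ_inter]
    exact Finset.sum_comm
  rw [h2, Finset.sum_congr rfl hconst, Finset.sum_const, nsmul_eq_mul, h0, zero_mul] at h1
  simp [x, Equiv.Perm.mem_support.1 ha] at h1

end Averaging

/-- Let `R` be a division ring of characteristic `p ≥ 0` and let `σ ∈ Σ_n` have cycle type
`λ = (λ_1,…,λ_s)` (fixed points counted as parts equal to `1`).  Then `S_n(σ,R)` is a
semisimple ring if and only if `p ∤ λ_i` for every `1 ≤ i ≤ s`. -/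
theorem invariantSubring_isSemisimpleRing_iff
    (R : Type*) [DivisionRing R] (p : ℕ) [CharP R p]
    {n s : ℕ} (σ : Equiv.Perm (Fin n)) (lam : Fin s → ℕ)
    (hpos : ∀ i, 1 ≤ lam i) (hmono : ∀ i j : Fin s, i ≤ j → lam j ≤ lam i)
    (hsum : ∑ i, lam i = n) (hcyc : HasFullCycleType σ lam) :
    IsSemisimpleRing (invariantSubring R σ) ↔ ∀ i, ¬ p ∣ lam i := by
  unfold HasFullCycleType at hcyc
  have hmem : ∀ m, m ∈ σ.cycleType + Multiset.replicate (n - σ.cycleType.sum) 1 ↔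
      ∃ i, lam i = m := by
    intro m
    rw [hcyc, Multiset.mem_coe, List.mem_ofFn]
  constructor
  · intro hS i hi
    have hp : p.Prime := by
      rcases CharP.char_is_prime_or_zero R p with h | h
      · exact h
      · have := hpos i
        rw [h, zero_dvd_iff] at hi
        omega
    rcases Multiset.mem_add.1 ((hmem (lam i)).2 ⟨i, rfl⟩) with h | h
    · rw [Equiv.Perm.cycleType_def, Multiset.mem_map] at h
      obtain ⟨c, hc, hcard⟩ := h
      refine invariantSubring_not_semisimple (R := R) σ (c := c) hc ?_ hS
      rw [CharP.cast_eq_zero_iff R p]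
      rw [← hcard] at hi
      exact hi
    · rw [Multiset.eq_of_mem_replicate h] at hi
      exact hp.one_lt.ne' (Nat.dvd_one.1 hi)
  · intro h
    apply invariantSubring_semisimple
    rw [Ne, CharP.cast_eq_zero_iff R p, Nat.card_zpowers]
    intro hd
    rcases CharP.char_is_prime_or_zero R p with hp | hp
    · rw [← Equiv.Perm.lcm_cycleType] at hd
      have : ∀ M : Multiset ℕ, p ∣ M.lcm → ∃ m ∈ M, p ∣ m := by
        intro M
        induction M using Multiset.induction with
        | empty => intro h; simp at h; exact absurd h hp.ne_one
        | cons a M ih =>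
          intro h
          rw [Multiset.lcm_cons] at h
          rcases (Nat.Prime.dvd_mul hp).1 (h.trans (Nat.lcm_dvd_mul a M.lcm)) with h | h
          · exact ⟨a, Multiset.mem_cons_self _ _, h⟩
          · obtain ⟨m, hm, hd⟩ := ih h
            exact ⟨m, Multiset.mem_cons_of_mem hm, hd⟩
      obtain ⟨m, hm, hpm⟩ := this _ hd
      obtain ⟨i, rfl⟩ := (hmem m).1 (Multiset.mem_add.2 (Or.inl hm))
      exact h i hpm
    · rw [hp, zero_dvd_iff] at hd
      exact (orderOf_pos σ).ne' hd
end

section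
/- Let R be an algebraically closed field of characteristic p ≥ 0, let σ ∈ Σ_n have cycle type λ = (λ_1,…,λ_s) and τ ∈ Σ_m have cycle type μ = (μ_1,…,μ_t), and assume p ∤ λ_i for all 1 ≤ i ≤ s and p ∤ μ_j for all 1 ≤ j ≤ t. Then S_n(σ,R) and S_m(τ,R) are isomorphic as rings if and only if m = n and ε_λ(x) = ε_μ(x) in ℤ[x]. -/
open Matrix

/-- `g_i(λ) = Σ_{1 ≤ k_1 < … < k_i ≤ s} gcd(λ_{k_1},…,λ_{k_i})`. -/
def gPart {s : ℕ} (lam : Fin s → ℕ) (i : ℕ) : ℕ :=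
  ∑ T ∈ Finset.univ.powersetCard i, T.gcd lam

/-- The partition polynomial `ε_λ(x) = Σ_{i=0}^{s-1} (-1)^{s-1-i} (g_{i+1}(λ)/g_s(λ)) xⁱ ∈ ℤ[x]`. -/
noncomputable def partitionPoly {s : ℕ} (lam : Fin s → ℕ) : Polynomial ℤ :=
  ∑ i ∈ Finset.range s,
    Polynomial.C ((-1 : ℤ) ^ (s - 1 - i) * ((gPart lam (i + 1) / gPart lam s : ℕ) : ℤ)) *
      Polynomial.X ^ i

lemma exists_equiv_of_fiber_card {α β : Type*} [Fintype α] [Fintype β] (f : α → ℕ) (g : β → ℕ)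
    (h : ∀ k, Nat.card {a // f a = k} = Nat.card {b // g b = k}) :
    ∃ e : α ≃ β, ∀ a, g (e a) = f a := by
  have h' : ∀ k, Nonempty ({a // f a = k} ≃ {b // g b = k}) := fun k =>
    Finite.card_eq.1 (h k)
  let F := fun k => Classical.choice (h' k)
  refine ⟨(Equiv.sigmaFiberEquiv f).symm.trans
    ((Equiv.sigmaCongrRight F).trans (Equiv.sigmaFiberEquiv g)), fun a => ?_⟩
  simp [Equiv.sigmaFiberEquiv]
  exact (F (f a) ⟨a, rfl⟩).2

/-- counts from binomial sums -/
lemma fiber_card_of_choose {α β : Type*} [Fintype α] [Fintype β] (f : α → ℕ) (g : β → ℕ)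
    (hf : ∀ a, 0 < f a) (hg : ∀ a, 0 < g a)
    (h : ∀ j, 1 ≤ j → ∑ a, (f a).choose j = ∑ b, (g b).choose j) (k : ℕ) :
    Nat.card {a // f a = k} = Nat.card {b // g b = k} := by
  classical
  rcases Nat.eq_zero_or_pos k with rfl | hk
  · have : IsEmpty {a // f a = 0} := ⟨fun a => (hf a.1).ne' a.2⟩
    have : IsEmpty {a // g a = 0} := ⟨fun a => (hg a.1).ne' a.2⟩
    simp
  open Polynomial in
  have key : ∀ {γ : Type _} [Fintype γ] (u : γ → ℕ),
      ((∑ a, (1 + X : ℤ[X]) ^ u a).comp (X - 1)) = ∑ a, X ^ u a := by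
    intro γ _ u
    simp [Polynomial.sum_comp]
  open Polynomial in
  have key2 : ∀ {γ : Type _} [Fintype γ] (u : γ → ℕ),
      ((∑ a, (1 + X : ℤ[X]) ^ u a).comp (X - 1)) = ∑ a, X ^ u a := by
    intro γ _ u
    simp [Polynomial.sum_comp]
  open Polynomial in
  have hd : (∑ a, (1 + X : ℤ[X]) ^ f a) =
      (∑ a, (1 + X : ℤ[X]) ^ g a) + C ((Fintype.card α : ℤ) - Fintype.card β) := by
    ext j
    rcases Nat.eq_zero_or_pos j with rfl | hj
    · simp [Polynomial.coeff_one_add_X_pow]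
    · have := h j hj
      simp only [Polynomial.finsetSum_coeff, Polynomial.coeff_one_add_X_pow, coeff_add, coeff_C,
        hj.ne', if_false, add_zero]
      exact_mod_cast this
  have hd2 := congrArg (fun q => (q.comp (Polynomial.X - 1)).coeff k) hd
  simp only [Polynomial.add_comp, Polynomial.coeff_add, Polynomial.C_comp, Polynomial.coeff_C,
    hk.ne', if_false, add_zero] at hd2
  rw [key, key2] at hd2
  simp only [Polynomial.finsetSum_coeff, Polynomial.coeff_X_pow, Finset.sum_boole] at hd2
  rw [Nat.card_eq_fintype_card, Nat.card_eq_fintype_card, Fintype.card_subtype,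
    Fintype.card_subtype]
  have h2 : (Finset.univ.filter fun a => k = f a).card =
    (Finset.univ.filter fun a => k = g a).card := by exact_mod_cast hd2
  simpa [eq_comm] using h2

lemma sum_choose_of_equiv {α β : Type*} [Fintype α] [Fintype β] (f : α → ℕ) (g : β → ℕ)
    (e : α ≃ β) (he : ∀ a, g (e a) = f a) (j : ℕ) :
    ∑ a, (f a).choose j = ∑ b, (g b).choose j := by
  rw [← e.sum_comp]; simp [he]

/-- Central idempotents killing nilpotents to order `j`. -/
def cIdem (A : Type*) [Ring A] (j : ℕ) : Set A :=
  {e | e * e = e ∧ (∀ x, e * x = x * e) ∧ ∀ x, IsNilpotent x → (e * x) ^ j = 0}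

lemma cIdem_card_congr {A B : Type*} [Ring A] [Ring B] (φ : A ≃+* B) (j : ℕ) :
    Nat.card (cIdem A j) = Nat.card (cIdem B j) := by
  refine Nat.card_congr (φ.toEquiv.subtypeEquiv fun e => ?_)
  simp only [cIdem, Set.mem_ofPred_eq, RingEquiv.toEquiv_eq_coe, RingEquiv.coe_toEquiv]
  refine and_congr ?_ (and_congr ?_ ?_)
  · rw [← map_mul, φ.injective.eq_iff]
  · constructor
    · intro h x
      obtain ⟨y, rfl⟩ := φ.surjective x
      rw [← map_mul, h, map_mul]
    · intro h x
      apply φ.injective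
      rw [map_mul, map_mul, h]
  · constructor
    · intro h x hx
      obtain ⟨y, rfl⟩ := φ.surjective x
      rw [← map_mul, ← map_pow, h, map_zero]
      exact (IsNilpotent.map_iff φ.injective).1 hx
    · intro h x hx
      apply φ.injective
      rw [map_pow, map_mul, h, map_zero]
      exact hx.map φ

/-- Jordan block -/
def jordanN (R : Type*) [Field R] (k : ℕ) : Matrix (Fin k) (Fin k) R :=
  Matrix.of fun i l => if l.val = i.val + 1 then 1 else 0

lemma jordanN_pow (R : Type*) [Field R] (k j : ℕ) (i l : Fin k) :
    (jordanN R k ^ j) i l = if l.val = i.val + j then 1 else 0 := by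
  induction j generalizing i l with
  | zero => simp [Matrix.one_apply, Fin.ext_iff, eq_comm]
  | succ j ih =>
    rw [pow_succ, Matrix.mul_apply]
    have hJ : ∀ a b : Fin k, jordanN R k a b = if b.val = a.val + 1 then 1 else 0 := fun _ _ => rfl
    simp only [ih, hJ]
    have hl := l.2
    by_cases h : l.val = i.val + (j + 1)
    · rw [Finset.sum_eq_single ⟨i.val + j, by omega⟩]
      · simp [h, add_assoc]
      · intro b _ hb
        have : b.val ≠ i.val + j := fun hh => hb (Fin.ext hh)
        simp [this]
      · simp
    · rw [if_neg h]
      apply Finset.sum_eq_zero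
      intro b _
      split_ifs <;> first | omega | simp

lemma matrix_nilp_pow {R : Type*} [Field R] {k : ℕ} (x : Matrix (Fin k) (Fin k) R)
    (hx : IsNilpotent x) : x ^ k = 0 := by
  have h := Matrix.isNilpotent_charpoly_sub_pow_of_isNilpotent hx
  have h2 := sub_eq_zero.1 h.eq_zero
  have h3 := Matrix.aeval_self_charpoly x
  rw [h2] at h3
  simpa using h3

lemma matrix_central_idem {R : Type*} [Field R] {k : ℕ} (x : Matrix (Fin k) (Fin k) R)
    (hx : x * x = x) (hc : ∀ y, x * y = y * x) : x = 0 ∨ x = 1 := by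
  have : x ∈ Set.center (Matrix (Fin k) (Fin k) R) := by
    rw [Semigroup.mem_center_iff]
    intro y; exact (hc y).symm
  rw [Matrix.center_eq_range] at this
  obtain ⟨c, rfl⟩ := this
  rcases isEmpty_or_nonempty (Fin k) with hk | hk
  · left; exact Subsingleton.elim _ _
  · rw [← map_mul] at hx
    have := Matrix.scalar_inj.1 hx
    rcases IsIdempotentElem.iff_eq_zero_or_one.1 this with h | h
    · left; simp [h]
    · right; simp [h]

lemma cIdem_card {R : Type*} [Field R] {E : Type*} [Fintype E] (k : E → ℕ) (hk : ∀ e, 0 < k e)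
    (j : ℕ) (hj : 0 < j) : Nat.card (cIdem (∀ e, Matrix (Fin (k e)) (Fin (k e)) R) j) =
      2 ^ Nat.card {e // k e ≤ j} := by
  classical
  let Φ : Finset {e // k e ≤ j} → (∀ e, Matrix (Fin (k e)) (Fin (k e)) R) := fun s e =>
    if h : k e ≤ j then (if (⟨e, h⟩ : {e // k e ≤ j}) ∈ s then 1 else 0) else 0
  have hne : ∀ e, (1 : Matrix (Fin (k e)) (Fin (k e)) R) ≠ 0 := fun e => by
    have : Nonempty (Fin (k e)) := ⟨⟨0, hk e⟩⟩
    exact one_ne_zero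
  have hinj : Function.Injective Φ := by
    intro s t hst
    ext ⟨e, he⟩
    have := congrFun hst e
    simp only [Φ, he, dif_pos] at this
    have h1 := hne e
    split_ifs at this <;> simp_all
  have hrange : cIdem (∀ e, Matrix (Fin (k e)) (Fin (k e)) R) j = Set.range Φ := by
    ext x
    constructor
    · rintro ⟨h1, h2, h3⟩
      have hx : ∀ e, x e = 0 ∨ x e = 1 := by
        intro e
        apply matrix_central_idem _ (congrFun h1 e)
        intro y
        simpa using congrFun (h2 (Pi.single e y)) e
      have hx' : ∀ e, x e = 1 → k e ≤ j := by
        intro e he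
        by_contra hlt
        push Not at hlt
        have hn : IsNilpotent (Pi.single e (jordanN R (k e)) :
            ∀ e, Matrix (Fin (k e)) (Fin (k e)) R) := by
          refine ⟨k e, ?_⟩
          ext1 e'
          rw [Pi.pow_apply]
          by_cases hee : e' = e
          swap
          · rw [Pi.single_eq_of_ne hee, zero_pow (hk e).ne', Pi.zero_apply]
          subst hee
          rw [Pi.single_eq_same]
          ext a b
          rw [jordanN_pow]
          have := b.2
          rw [if_neg (by omega)]; rfl
        have := congrFun (h3 _ hn) e
        simp only [Pi.pow_apply, Pi.mul_apply, he, Pi.single_eq_same, one_mul, Pi.zero_apply]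
          at this
        have := congrFun (congrFun this ⟨0, hk e⟩) ⟨j, hlt⟩
        rw [jordanN_pow] at this
        simp at this
      refine ⟨Finset.univ.filter fun e => x e.1 = 1, ?_⟩
      ext1 e
      simp only [Φ, Finset.mem_filter, Finset.mem_univ, true_and]
      rcases hx e with h | h
      · have := (hne e).symm
        simp [h, this]
      · simp [h, hx' e h]
    · rintro ⟨s, rfl⟩
      refine ⟨?_, ?_, ?_⟩
      · ext1 e; simp only [Φ, Pi.mul_apply]; split_ifs <;> simp
      · intro y; ext1 e; simp only [Φ, Pi.mul_apply]; split_ifs <;> simp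
      · rintro y ⟨N, hN⟩
        ext1 e
        simp only [Φ, Pi.mul_apply, Pi.pow_apply, Pi.zero_apply]
        split_ifs with h1 h2
        · rw [one_mul]
          exact pow_eq_zero_of_le h1 (matrix_nilp_pow _ ⟨N, congrFun hN e⟩)
        · simp [hj.ne']
        · simp [hj.ne']
  rw [hrange, Nat.card_congr (Equiv.ofInjective Φ hinj).symm]
  simp

lemma card_le_succ_split {γ : Type*} [Fintype γ] (u : γ → ℕ) (k : ℕ) :
    Nat.card {a // u a ≤ k + 1} = Nat.card {a // u a ≤ k} + Nat.card {a // u a = k + 1} := by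
  classical
  simp only [Nat.card_eq_fintype_card, Fintype.card_subtype]
  rw [← Finset.card_union_of_disjoint]
  · congr 1
    ext a
    simp
    omega
  · rw [Finset.disjoint_left]
    intro a
    simp
    omega

lemma fiber_card_of_ringEquiv {R : Type*} [Field R] {α β : Type*} [Fintype α] [Fintype β]
    (f : α → ℕ) (g : β → ℕ) (hf : ∀ a, 0 < f a) (hg : ∀ a, 0 < g a)
    (φ : (∀ e, Matrix (Fin (f e)) (Fin (f e)) R) ≃+* (∀ e, Matrix (Fin (g e)) (Fin (g e)) R))
    (k : ℕ) : Nat.card {a // f a = k} = Nat.card {b // g b = k} := by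
  classical
  have h1 : ∀ j, Nat.card {a // f a ≤ j} = Nat.card {b // g b ≤ j} := by
    intro j
    rcases Nat.eq_zero_or_pos j with rfl | hj
    · have : IsEmpty {a // f a ≤ 0} := ⟨fun a => by have := hf a.1; have := a.2; omega⟩
      have : IsEmpty {a // g a ≤ 0} := ⟨fun a => by have := hg a.1; have := a.2; omega⟩
      rw [Nat.card_of_isEmpty, Nat.card_of_isEmpty]
    · have := cIdem_card_congr φ j
      rw [cIdem_card f hf j hj, cIdem_card g hg j hj] at this
      exact Nat.pow_right_injective le_rfl this
  rcases Nat.eq_zero_or_pos k with rfl | hk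
  · simpa using h1 0
  obtain ⟨k, rfl⟩ : ∃ k', k = k' + 1 := ⟨k - 1, by omega⟩
  have key := card_le_succ_split f k
  have key2 := card_le_succ_split g k
  have := h1 (k + 1)
  rw [key, key2, h1 k] at this
  omega

lemma gPart_one {s : ℕ} (lam : Fin s → ℕ) : gPart lam 1 = ∑ i, lam i := by
  simp [gPart, Finset.powersetCard_one]

lemma gPart_top {s : ℕ} (lam : Fin s → ℕ) : gPart lam s = Finset.univ.gcd lam := by
  have : (Finset.univ : Finset (Fin s)).powersetCard s = {Finset.univ} := by
    have h := Finset.powersetCard_self (Finset.univ : Finset (Fin s))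
    rwa [Finset.card_univ, Fintype.card_fin] at h
  rw [gPart, this]; simp

lemma gPart_gt {s : ℕ} (lam : Fin s → ℕ) {j : ℕ} (h : s < j) : gPart lam j = 0 := by
  rw [gPart, Finset.powersetCard_eq_empty.2 (by simpa using h)]; simp

lemma gPart_top_pos {s : ℕ} (lam : Fin s → ℕ) (hs : 0 < s) (hpos : ∀ i, 1 ≤ lam i) :
    0 < gPart lam s := by
  rw [gPart_top]
  apply Nat.pos_of_ne_zero
  intro h
  rw [Finset.gcd_eq_zero_iff] at h
  have := h ⟨0, hs⟩ (Finset.mem_univ _)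
  have := hpos ⟨0, hs⟩
  omega

lemma gPart_top_dvd {s : ℕ} (lam : Fin s → ℕ) (j : ℕ) : gPart lam s ∣ gPart lam j := by
  rw [gPart_top, gPart]
  apply Finset.dvd_sum
  intro T _
  exact Finset.gcd_mono (Finset.subset_univ _)

lemma partitionPoly_coeff {s : ℕ} (lam : Fin s → ℕ) (i : ℕ) :
    (partitionPoly lam).coeff i = if i < s then
      ((-1 : ℤ) ^ (s - 1 - i) * ((gPart lam (i + 1) / gPart lam s : ℕ) : ℤ)) else 0 := by
  simp only [partitionPoly, Polynomial.finsetSum_coeff, Polynomial.coeff_C_mul_X_pow]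
  rw [Finset.sum_ite_eq]
  simp

lemma partitionPoly_s_le {s t : ℕ} (lam : Fin s → ℕ) (mu : Fin t → ℕ) (hpos : ∀ i, 1 ≤ lam i)
    (h : partitionPoly lam = partitionPoly mu) : s ≤ t := by
  rcases Nat.eq_zero_or_pos s with rfl | hs
  · omega
  by_contra hlt
  have := congrArg (fun q => Polynomial.coeff q (s - 1)) h
  simp only [partitionPoly_coeff] at this
  rw [if_pos (by omega), if_neg (by omega), Nat.sub_add_cancel hs,
    Nat.div_self (gPart_top_pos lam hs hpos)] at this
  simp at this

lemma gPart_s_le {s t : ℕ} (lam : Fin s → ℕ) (mu : Fin t → ℕ) (hpos : ∀ i, 1 ≤ lam i)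
    (h : ∀ j, 1 ≤ j → gPart lam j = gPart mu j) : s ≤ t := by
  rcases Nat.eq_zero_or_pos s with rfl | hs
  · omega
  by_contra hlt
  have h1 := h s hs
  have h2 := gPart_top_pos lam hs hpos
  rw [gPart_gt mu (by omega)] at h1
  omega

lemma partition_iff {s t n m : ℕ} (lam : Fin s → ℕ) (mu : Fin t → ℕ)
    (hlpos : ∀ i, 1 ≤ lam i) (hmpos : ∀ i, 1 ≤ mu i)
    (hlsum : ∑ i, lam i = n) (hmsum : ∑ j, mu j = m) :
    (m = n ∧ partitionPoly lam = partitionPoly mu) ↔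
      ∀ j, 1 ≤ j → gPart lam j = gPart mu j := by
  constructor
  · rintro ⟨rfl, h⟩
    obtain rfl : s = t := le_antisymm (partitionPoly_s_le lam mu hlpos h)
      (partitionPoly_s_le mu lam hmpos h.symm)
    have hq : ∀ i, i < s → gPart lam (i + 1) / gPart lam s = gPart mu (i + 1) / gPart mu s := by
      intro i hi
      have := congrArg (fun q => Polynomial.coeff q i) h
      simp only [partitionPoly_coeff, hi, if_true] at this
      have := mul_left_cancel₀ (pow_ne_zero _ (by norm_num)) this
      exact_mod_cast this
    intro j hj
    rcases lt_or_ge s j with hlt | hle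
    · rw [gPart_gt _ hlt, gPart_gt _ hlt]
    have hs : 0 < s := by omega
    have h1 : gPart lam s = gPart mu s := by
      have h0 := hq 0 hs
      rw [zero_add, gPart_one, gPart_one, hlsum, hmsum] at h0
      have d1 := gPart_top_dvd lam 1
      have d2 := gPart_top_dvd mu 1
      rw [gPart_one, hlsum] at d1
      rw [gPart_one, hmsum] at d2
      have e1 := Nat.div_mul_cancel d1
      have e2 := Nat.div_mul_cancel d2
      rw [h0] at e1
      have hm : 0 < m := by
        rw [← hlsum]
        exact lt_of_lt_of_le (hlpos ⟨0, hs⟩)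
          (Finset.single_le_sum (fun _ _ => Nat.zero_le _) (Finset.mem_univ _))
      have hne : m / gPart mu s ≠ 0 := by
        intro h; rw [h] at e2; omega
      exact Nat.eq_of_mul_eq_mul_left (Nat.pos_of_ne_zero hne) (e1.trans e2.symm)
    have h2 := hq (j - 1) (by omega)
    rw [Nat.sub_add_cancel hj] at h2
    rw [← Nat.div_mul_cancel (gPart_top_dvd lam j), ← Nat.div_mul_cancel (gPart_top_dvd mu j),
      h2, h1]
  · intro h
    obtain rfl : s = t := le_antisymm (gPart_s_le lam mu hlpos h)
      (gPart_s_le mu lam hmpos fun j hj => (h j hj).symm)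
    refine ⟨by rw [← hlsum, ← hmsum, ← gPart_one, ← gPart_one, h 1 le_rfl], ?_⟩
    ext i
    rw [partitionPoly_coeff, partitionPoly_coeff]
    split_ifs with hi
    · rw [h (i + 1) (by omega), h s (by omega)]
    · rfl

/-- binomial sums over roots of unity -/
lemma card_roots_gcd (R : Type*) [Field R] [IsAlgClosed R] {g : ℕ} (hg : (g : R) ≠ 0) :
    Nat.card {z : R // z ^ g = 1} = g := by
  classical
  have hg0 : 0 < g := Nat.pos_of_ne_zero (by rintro rfl; simp at hg)
  have hsep : (Polynomial.X ^ g - 1 : Polynomial R).Separable :=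
    Polynomial.X_pow_sub_one_separable_iff.2 hg
  have h1 := Polynomial.card_rootSet_eq_natDegree (K := R) hsep (by
    exact IsAlgClosed.splits _)
  rw [← Polynomial.C_1, Polynomial.natDegree_X_pow_sub_C, ← Nat.card_eq_fintype_card] at h1
  refine Eq.trans ?_ h1
  refine Nat.card_congr (Equiv.subtypeEquivRight fun z => ?_)
  rw [Polynomial.mem_rootSet]
  have := Polynomial.X_pow_sub_C_ne_zero hg0 (1 : R)
  simp only [Polynomial.C_1] at this
  simp [this, sub_eq_zero]

noncomputable def rootMult (R : Type*) [Field R] {s : ℕ} (lam : Fin s → ℕ) (z : R) : ℕ :=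
  Nat.card {i : Fin s // z ^ lam i = 1}

abbrev RootE (R : Type*) [Field R] {s : ℕ} (lam : Fin s → ℕ) : Type _ :=
  {z : R // ∃ i, z ^ lam i = 1}

lemma rootE_finite (R : Type*) [Field R] {s : ℕ} (lam : Fin s → ℕ) (hpos : ∀ i, 1 ≤ lam i) :
    Finite (RootE R lam) := by
  classical
  have : {z : R | ∃ i, z ^ lam i = 1} ⊆
      ⋃ i, ((Polynomial.nthRootsFinset (lam i) (1 : R) : Finset R) : Set R) := by
    rintro z ⟨i, hi⟩
    rw [Set.mem_iUnion]
    refine ⟨i, ?_⟩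
    simp [Polynomial.mem_nthRootsFinset (hpos i), hi]
  exact ((Set.finite_iUnion fun i => Finset.finite_toSet _).subset this).to_subtype

lemma rootMult_pos (R : Type*) [Field R] {s : ℕ} (lam : Fin s → ℕ) (z : RootE R lam) :
    0 < rootMult R lam z := by
  obtain ⟨i, hi⟩ := z.2
  have : Nonempty {i : Fin s // (z : R) ^ lam i = 1} := ⟨⟨i, hi⟩⟩
  exact Nat.card_pos

lemma sum_choose_rootMult (R : Type*) [Field R] [IsAlgClosed R] (p : ℕ) [CharP R p] {s : ℕ}
    (lam : Fin s → ℕ) (hlp : ∀ i, ¬ p ∣ lam i) [Fintype (RootE R lam)] (j : ℕ) (hj : 1 ≤ j) :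
    ∑ z : RootE R lam, (rootMult R lam z).choose j = gPart lam j := by
  classical
  have h1 : ∀ z : R, (rootMult R lam z).choose j =
      ∑ T ∈ Finset.univ.powersetCard j, if (∀ i ∈ T, z ^ lam i = 1) then 1 else 0 := by
    intro z
    rw [rootMult, Nat.card_eq_fintype_card, Fintype.card_subtype, ← Finset.card_powersetCard,
      Finset.card_eq_sum_ones, ← Finset.sum_filter]
    congr 1
    ext T
    simp [Finset.mem_powersetCard, Finset.subset_iff]
    tauto
  simp_rw [h1]
  rw [Finset.sum_comm, gPart]
  refine Finset.sum_congr rfl fun T hT => ?_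
  rw [Finset.mem_powersetCard] at hT
  obtain ⟨i0, hi0⟩ : T.Nonempty := by
    rw [← Finset.card_pos]; omega
  have hg : ((T.gcd lam : ℕ) : R) ≠ 0 := by
    intro h
    rw [CharP.cast_eq_zero_iff R p] at h
    exact hlp i0 (h.trans (Finset.gcd_dvd hi0))
  conv_rhs => rw [← card_roots_gcd R hg]
  have hiff : ∀ z : R, z ^ T.gcd lam = 1 ↔ ∀ i ∈ T, z ^ lam i = 1 := by
    intro z
    simp only [← orderOf_dvd_iff_pow_eq_one]
    exact Finset.dvd_gcd_iff
  rw [← Finset.sum_filter, ← Finset.card_eq_sum_ones, ← Fintype.card_subtype,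
    ← Nat.card_eq_fintype_card]
  refine Nat.card_congr ⟨fun z => ⟨z.1.1, (hiff _).2 z.2⟩,
    fun z => ⟨⟨z.1, i0, (hiff _).1 z.2 i0 hi0⟩, (hiff _).1 z.2⟩, fun _ => rfl, fun _ => rfl⟩

lemma cycle_reps {n s : ℕ} (σ : Equiv.Perm (Fin n)) (lam : Fin s → ℕ)
    (h : HasFullCycleType σ lam) :
    ∃ x : Fin s → Fin n, (∀ i (k : ℤ), (σ ^ k) (x i) = x i ↔ (lam i : ℤ) ∣ k) ∧
      (∀ y, ∃ i, ∃ k : ℤ, (σ ^ k) (x i) = y) ∧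
      (∀ i j, σ.SameCycle (x i) (x j) → i = j) := by
  classical
  let I := σ.cycleFactorsFinset ⊕ Function.fixedPoints σ
  let L : I → ℕ := Sum.elim (fun c => c.1.support.card) (fun _ => 1)
  have hL : (Finset.univ : Finset I).val.map L =
      (Finset.univ : Finset (Fin s)).val.map lam := by
    have h2 : (Finset.univ : Finset (Fin s)).val.map lam = (List.ofFn lam : Multiset ℕ) := by
      simp [List.ofFn_eq_map]
    rw [h2, ← h]
    have h3 : n - σ.cycleType.sum = Fintype.card (Function.fixedPoints σ) := by
      rw [Equiv.Perm.card_fixedPoints, Fintype.card_fin]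
    rw [h3]
    have h4 : (Finset.univ : Finset I).val = (Finset.univ : Finset (σ.cycleFactorsFinset)).val.map Sum.inl +
        (Finset.univ : Finset (Function.fixedPoints σ)).val.map Sum.inr := rfl
    rw [h4, Multiset.map_add, Multiset.map_map, Multiset.map_map]
    congr 1
    · rw [Equiv.Perm.cycleType_def]
      have : (Finset.univ : Finset (σ.cycleFactorsFinset)).val.map (Subtype.val) =
          σ.cycleFactorsFinset.val := by
        have h5 := Multiset.attach_map_val σ.cycleFactorsFinset.val
        rw [← Finset.attach_val] at h5
        rw [Finset.univ_eq_attach]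
        exact h5
      rw [← this, Multiset.map_map]
      rfl
    · have : (L ∘ Sum.inr : Function.fixedPoints σ → ℕ) = Function.const _ 1 := rfl
      rw [this, Multiset.map_const]
      rfl
  obtain ⟨e, he⟩ := exists_equiv_of_fiber_card lam L (fun k => by
    have := congrArg (Multiset.count k) hL
    rw [Multiset.count_map, Multiset.count_map] at this
    rw [Nat.card_eq_fintype_card, Nat.card_eq_fintype_card, Fintype.card_subtype,
      Fintype.card_subtype]
    simp only [eq_comm (a := k)] at this
    exact this.symm)
  have hc : ∀ c : σ.cycleFactorsFinset, ∃ x, c.1 x ≠ x := fun c =>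
    (Equiv.Perm.mem_cycleFactorsFinset_iff.1 c.2).1.imp fun x hx => hx.1
  choose pc hpc using hc
  have hpc' : ∀ c, σ.cycleOf (pc c) = c.1 := fun c =>
    ((Equiv.Perm.cycle_is_cycleOf (Equiv.Perm.mem_support.2 (hpc c)) c.2)).symm
  let pt : I → Fin n := Sum.elim pc (fun x => x.1)
  have hper : ∀ i (k : ℤ), (σ ^ k) (pt i) = pt i ↔ (L i : ℤ) ∣ k := by
    rintro (c | x) k
    · change (σ ^ k) (pc c) = pc c ↔ ((c.1.support.card : ℕ) : ℤ) ∣ k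
      have hcyc := (Equiv.Perm.mem_cycleFactorsFinset_iff.1 c.2).1
      rw [← hcyc.orderOf, orderOf_dvd_iff_zpow_eq_one]
      have h1 := Equiv.Perm.cycleOf_zpow_apply_self σ (pc c) k
      rw [hpc'] at h1
      rw [← h1]
      obtain ⟨m, rfl | rfl⟩ := k.eq_nat_or_neg
      · simpa using (hcyc.pow_eq_one_iff' (hpc c)).symm
      · have := (hcyc.pow_eq_one_iff' (n := m) (hpc c)).symm
        rw [_root_.zpow_neg, inv_eq_one, zpow_natCast, ← this, Equiv.Perm.inv_eq_iff_eq, eq_comm]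
    · change (σ ^ k) x.1 = x.1 ↔ ((1 : ℕ) : ℤ) ∣ k
      simp only [Nat.cast_one, one_dvd, iff_true]
      exact Function.IsFixedPt.perm_zpow x.2 k
  have hcov : ∀ y, ∃ i, ∃ k : ℤ, (σ ^ k) (pt i) = y := by
    intro y
    by_cases hy : σ y = y
    · exact ⟨Sum.inr ⟨y, hy⟩, 0, rfl⟩
    · have hm := Equiv.Perm.cycleOf_mem_cycleFactorsFinset_iff.2 (Equiv.Perm.mem_support.2 hy)
      refine ⟨Sum.inl ⟨_, hm⟩, ?_⟩
      have h1 := hpc ⟨_, hm⟩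
      change σ.SameCycle (pc ⟨_, hm⟩) y
      have h2 : pc ⟨_, hm⟩ ∈ (σ.cycleOf y).support := Equiv.Perm.mem_support.2 h1
      rw [Equiv.Perm.mem_support_cycleOf_iff' hy] at h2
      exact h2.symm
  have hinj : ∀ i j, σ.SameCycle (pt i) (pt j) → i = j := by
    have hfix : ∀ (x : Function.fixedPoints σ) y, σ.SameCycle x.1 y → x.1 = y := by
      rintro x y ⟨k, hk⟩
      rw [← hk]; exact (Function.IsFixedPt.perm_zpow x.2 k).symm
    have hcx : ∀ c (x : Function.fixedPoints σ), ¬ σ.SameCycle x.1 (pc c) := by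
      intro c x hx
      have h1 := hfix _ _ hx
      have h2 := hpc c
      rw [← hpc' c, Equiv.Perm.cycleOf_apply_self, ← h1] at h2
      exact h2 x.2
    rintro (c | x) (d | y) hs
    · have := hs.cycleOf_eq
      change σ.cycleOf (pc c) = σ.cycleOf (pc d) at this
      rw [hpc', hpc'] at this
      rw [Subtype.ext this]
    · exact absurd hs.symm (hcx c y)
    · exact absurd hs (hcx d x)
    · rw [Subtype.ext (hfix x _ hs)]
  refine ⟨pt ∘ e, fun i k => ?_, fun y => ?_, fun i j hij => e.injective (hinj _ _ hij)⟩
  · rw [← he]; exact hper _ _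
  · obtain ⟨i, k, hk⟩ := hcov y
    exact ⟨e.symm i, k, by simpa using hk⟩

/-- The permutation operator. -/
def permOp (R : Type*) [Field R] {n : ℕ} (σ : Equiv.Perm (Fin n)) :
    Module.End R (Fin n → R) := LinearMap.funLeft R R σ

lemma mem_eig {R : Type*} [Field R] {n : ℕ} {σ : Equiv.Perm (Fin n)} {z : R} {v : Fin n → R} :
    v ∈ (permOp R σ).eigenspace z ↔ ∀ y, v (σ y) = z * v y := by
  rw [Module.End.mem_eigenspace_iff]
  exact funext_iff

lemma eig_zpow {R : Type*} [Field R] {n : ℕ} {σ : Equiv.Perm (Fin n)} {z : R} (hz : z ≠ 0)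
    {v : Fin n → R}
    (hv : v ∈ (permOp R σ).eigenspace z) (k : ℤ) (y : Fin n) : v ((σ ^ k) y) = z ^ k * v y := by
  rw [mem_eig] at hv
  have hnat : ∀ (k : ℕ) y, v ((σ ^ k) y) = z ^ k * v y := by
    intro k
    induction k with
    | zero => simp
    | succ k ih =>
      intro y
      rw [pow_succ', Equiv.Perm.mul_apply, hv, ih, pow_succ']
      ring
  obtain ⟨m, rfl | rfl⟩ := k.eq_nat_or_neg
  · simpa using hnat m y
  · have h1 := hnat m ((σ ^ (-(m : ℤ))) y)
    rw [_root_.zpow_neg, zpow_natCast, ← Equiv.Perm.mul_apply, mul_inv_cancel, Equiv.Perm.one_apply] at h1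
    rw [_root_.zpow_neg, _root_.zpow_neg, zpow_natCast, zpow_natCast, h1,
      inv_mul_cancel_left₀ (pow_ne_zero _ hz)]

lemma eig_finrank {R : Type*} [Field R] {n s : ℕ} (σ : Equiv.Perm (Fin n)) (lam : Fin s → ℕ)
    (hpos : ∀ i, 1 ≤ lam i)
    (h : HasFullCycleType σ lam) (z : R) :
    Module.finrank R ((permOp R σ).eigenspace z) = rootMult R lam z := by
  classical
  obtain ⟨x, hper, hcov, hinj⟩ := cycle_reps σ lam h
  choose idx ex hex using hcov
  rcases eq_or_ne z 0 with rfl | hz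
  · have h1 : (permOp R σ).eigenspace 0 = ⊥ := by
      rw [eq_bot_iff]
      intro v hv
      rw [mem_eig] at hv
      ext y
      have := hv (σ⁻¹ y)
      simpa using this
    have h2 : IsEmpty {i : Fin s // (0 : R) ^ lam i = 1} := ⟨fun i => by
      have h1 := i.2
      rw [zero_pow (by have := hpos i.1; omega)] at h1
      exact zero_ne_one h1⟩
    rw [h1, rootMult]
    simp
  have huniq : ∀ i (k : ℤ) y, (σ ^ k) (x i) = y → idx y = i ∧ (lam i : ℤ) ∣ k - ex y := by
    intro i k y hy
    have h1 : idx y = i := by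
      apply hinj
      have a : σ.SameCycle (x (idx y)) y := ⟨_, hex y⟩
      have b : σ.SameCycle (x i) y := ⟨_, hy⟩
      exact a.trans b.symm
    refine ⟨h1, ?_⟩
    rw [← hper, sub_eq_neg_add, _root_.zpow_add, Equiv.Perm.mul_apply, hy, _root_.zpow_neg,
      Equiv.Perm.inv_eq_iff_eq, ← h1, hex]
  have hzk : ∀ i (k l : ℤ), z ^ lam i = 1 → (lam i : ℤ) ∣ k - l → z ^ k = z ^ l := by
    intro i k l hi ⟨q, hq⟩
    have : k = l + lam i * q := by omega
    rw [this, zpow_add₀ hz, _root_.zpow_mul, zpow_natCast, hi, _root_.one_zpow, mul_one]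
  let F : ((permOp R σ).eigenspace z) ≃ₗ[R] ({i : Fin s // z ^ lam i = 1} → R) :=
    { toFun := fun v i => v.1 (x i)
      map_add' := fun _ _ => rfl
      map_smul' := fun _ _ => rfl
      invFun := fun a => ⟨fun y => if h : z ^ lam (idx y) = 1 then z ^ ex y * a ⟨idx y, h⟩ else 0, by
        rw [mem_eig]
        intro y
        obtain ⟨h1, h2⟩ := huniq (idx y) (ex y + 1) (σ y) (by
          rw [add_comm, _root_.zpow_add, Equiv.Perm.mul_apply, hex, zpow_one])
        simp only [h1]
        split_ifs with hh
        · rw [← hzk _ _ _ hh h2, zpow_add₀ hz, zpow_one]; ring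
        · simp⟩
      left_inv := by
        rintro ⟨v, hv⟩
        ext y
        simp only
        split_ifs with hh
        · rw [← eig_zpow hz hv, hex]
        · have h1 := eig_zpow hz hv (lam (idx y)) (x (idx y))
          rw [(hper _ _).2 dvd_rfl, zpow_natCast] at h1
          have h2 : v (x (idx y)) = 0 := by
            by_contra hne
            exact hh (mul_right_cancel₀ hne (by rw [one_mul]; exact h1.symm))
          rw [← hex y, eig_zpow hz hv, h2, mul_zero]
      right_inv := by
        intro a
        ext ⟨i, hi⟩
        obtain ⟨h1, h2⟩ := huniq i 0 (x i) (by simp)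
        have h3 := hzk _ _ _ hi h2
        simp only [h1, hi, dif_pos, ← h3]
        simp }
  rw [F.finrank_eq, Module.finrank_pi, rootMult, Nat.card_eq_fintype_card]

lemma eig_top {R : Type*} [Field R] [IsAlgClosed R] (p : ℕ) [CharP R p] {n s : ℕ}
    (σ : Equiv.Perm (Fin n)) (lam : Fin s → ℕ) (hpos : ∀ i, 1 ≤ lam i)
    (h : HasFullCycleType σ lam) (hlp : ∀ i, ¬ p ∣ lam i) :
    ⨆ z : RootE R lam, (permOp R σ).eigenspace (z : R) = ⊤ := by
  classical
  have hN : ((∏ i, lam i : ℕ) : R) ≠ 0 := by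
    rw [Nat.cast_prod, Finset.prod_ne_zero_iff]
    intro i _ h0
    exact hlp i ((CharP.cast_eq_zero_iff R p _).1 h0)
  set N := ∏ i, lam i with hNdef
  have hσ : σ ^ N = 1 := by
    obtain ⟨x, hper, hcov, -⟩ := cycle_reps σ lam h
    ext1 y
    obtain ⟨i, k, rfl⟩ := hcov y
    rw [← Equiv.Perm.mul_apply, ← zpow_natCast, ← _root_.zpow_add, add_comm, _root_.zpow_add,
      Equiv.Perm.mul_apply, (hper i N).2 (by exact_mod_cast Finset.dvd_prod_of_mem _ (Finset.mem_univ _))]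
    rfl
  have hf : permOp R σ ^ N = 1 := by
    have : ∀ k, permOp R σ ^ k = permOp R (σ ^ k) := by
      intro k
      induction k with
      | zero => rfl
      | succ k ih => rw [pow_succ, ih, pow_succ']; rfl
    rw [this, hσ]; rfl
  have hss : (permOp R σ).IsSemisimple := by
    apply Module.End.isSemisimple_of_squarefree_aeval_eq_zero
      (Polynomial.X_pow_sub_one_separable_iff.2 hN).squarefree
    simp [hf]
  rw [eq_top_iff, ← hss.iSup_eigenspace_eq_top]
  apply iSup_le
  intro z
  by_cases hz : ∃ i, z ^ lam i = 1
  · exact le_iSup (fun z : RootE R lam => (permOp R σ).eigenspace (z : R)) ⟨z, hz⟩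
  · have h1 := eig_finrank σ lam hpos h z
    have : IsEmpty {i : Fin s // z ^ lam i = 1} := ⟨fun i => hz ⟨i.1, i.2⟩⟩
    rw [rootMult, Nat.card_of_isEmpty, Submodule.finrank_eq_zero] at h1
    rw [h1]; exact bot_le

lemma inv_mapsTo {R : Type*} [Field R] {n : ℕ} {σ : Equiv.Perm (Fin n)}
    (a : invariantSubring R σ) (z : R) (v : Fin n → R) (hv : v ∈ (permOp R σ).eigenspace z) :
    Matrix.mulVecLin a.1 v ∈ (permOp R σ).eigenspace z := by
  rw [mem_eig] at hv ⊢
  intro y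
  simp only [Matrix.mulVecLin_apply, Matrix.mulVec, dotProduct]
  rw [← Equiv.sum_comp σ, Finset.mul_sum]
  refine Finset.sum_congr rfl fun j _ => ?_
  rw [← a.2 y j, hv]
  ring

noncomputable def toEigHom (R : Type*) [Field R] {n : ℕ} (σ : Equiv.Perm (Fin n)) {ι : Type*}
    (z : ι → R) :
    invariantSubring R σ →+* (∀ i, Module.End R ((permOp R σ).eigenspace (z i))) where
  toFun a i := (Matrix.mulVecLin a.1).restrict (inv_mapsTo a (z i))
  map_one' := by
    ext i v : 3
    simp
  map_zero' := by
    ext i v : 3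
    simp
  map_add' a b := by
    ext i v : 3
    simp
  map_mul' a b := by
    ext i v : 3
    simp

lemma ext_of_iSup {R V ι : Type*} [Field R] [AddCommGroup V] [Module R V] (A : ι → Submodule R V)
    (hA : ⨆ i, A i = ⊤) (f g : V →ₗ[R] V) (h : ∀ i, ∀ v ∈ A i, f v = g v) : f = g := by
  have : LinearMap.eqLocus f g = ⊤ := by
    rw [eq_top_iff, ← hA]
    exact iSup_le fun i v hv => h i v hv
  ext1 v
  have hv : v ∈ LinearMap.eqLocus f g := by rw [this]; trivial
  exact hv

lemma exists_glue {R V ι : Type*} [DecidableEq ι] [Field R] [AddCommGroup V] [Module R V]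
    (A : ι → Submodule R V)
    (hA : ⨆ i, A i = ⊤) (hi : iSupIndep A) (h : ∀ i, Module.End R (A i)) :
    ∃ g : V →ₗ[R] V, ∀ i (v : A i), g v = h i v := by
  have hInternal := DirectSum.isInternal_submodule_of_iSupIndep_of_iSup_eq_top hi hA
  let e := LinearEquiv.ofBijective (DirectSum.coeLinearMap A) hInternal
  refine ⟨(DirectSum.toModule R ι V fun i => (A i).subtype ∘ₗ h i) ∘ₗ e.symm.toLinearMap, ?_⟩
  intro i v
  have : e.symm v = DirectSum.lof R ι (fun i => A i) i v := by
    rw [LinearEquiv.symm_apply_eq]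
    exact (DirectSum.coeLinearMap_lof A i v).symm
  simp [this]

lemma toEigHom_bijective {R : Type*} [Field R] {n : ℕ} (σ : Equiv.Perm (Fin n)) {ι : Type*}
    (z : ι → R) (hz : Function.Injective z)
    (htop : ⨆ i, (permOp R σ).eigenspace (z i) = ⊤) :
    Function.Bijective (toEigHom R σ z) := by
  classical
  constructor
  · intro a b hab
    apply Subtype.ext
    apply Matrix.toLin'.injective
    rw [Matrix.toLin'_apply', Matrix.toLin'_apply']
    refine ext_of_iSup _ htop _ _ fun i v hv => ?_
    have := congrArg Subtype.val (LinearMap.congr_fun (congrFun hab i) ⟨v, hv⟩)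
    exact this
  · intro h
    obtain ⟨g, hg⟩ := exists_glue _ htop
      ((permOp R σ).eigenspaces_iSupIndep.comp hz) h
    have hcomm : g ∘ₗ permOp R σ = permOp R σ ∘ₗ g := by
      refine ext_of_iSup _ htop _ _ fun i v hv => ?_
      have h1 := Module.End.mem_eigenspace_iff.1 hv
      have h2 := Module.End.mem_eigenspace_iff.1 (h i ⟨v, hv⟩).2
      rw [LinearMap.comp_apply, LinearMap.comp_apply, h1, map_smul, hg i ⟨v, hv⟩, h2]
    refine ⟨⟨LinearMap.toMatrix' g, fun i j => ?_⟩, ?_⟩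
    · rw [LinearMap.toMatrix'_apply, LinearMap.toMatrix'_apply]
      have h1 : permOp R σ (Pi.single (σ j) 1) = Pi.single j 1 := by
        ext y
        change (Pi.single (σ j) 1 : Fin n → R) (σ y) = _
        simp [Pi.single_apply]
      have h2 := congrFun (LinearMap.congr_fun hcomm (Pi.single (σ j) 1)) i
      rw [LinearMap.comp_apply, h1] at h2
      exact h2
    · ext1 i
      ext1 v
      apply Subtype.ext
      rw [← hg i v]
      change Matrix.mulVecLin (LinearMap.toMatrix' g) v.1 = g v.1
      rw [← Matrix.toLin'_apply', Matrix.toLin'_toMatrix']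

lemma decomposition {R : Type*} [Field R] [IsAlgClosed R] (p : ℕ) [CharP R p] {n s : ℕ}
    (σ : Equiv.Perm (Fin n)) (lam : Fin s → ℕ) (hpos : ∀ i, 1 ≤ lam i)
    (h : HasFullCycleType σ lam) (hlp : ∀ i, ¬ p ∣ lam i) :
    Nonempty (invariantSubring R σ ≃+* (∀ z : RootE R lam,
      Matrix (Fin (rootMult R lam z)) (Fin (rootMult R lam z)) R)) := by
  have hb := toEigHom_bijective σ (fun z : RootE R lam => (z : R)) Subtype.val_injective
    (eig_top p σ lam hpos h hlp)
  refine ⟨(RingEquiv.ofBijective _ hb).trans (RingEquiv.piCongrRight fun z => ?_)⟩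
  exact (algEquivMatrix (Module.finBasisOfFinrankEq R _
    (eig_finrank σ lam hpos h (z : R)))).toRingEquiv

lemma pi_matrix_equiv {R : Type*} [Field R] {α β : Type*} (f : α → ℕ) (g : β → ℕ)
    (e : α ≃ β) (he : ∀ a, g (e a) = f a) :
    Nonempty ((∀ a, Matrix (Fin (f a)) (Fin (f a)) R) ≃+*
      (∀ b, Matrix (Fin (g b)) (Fin (g b)) R)) := by
  obtain rfl : f = fun a => g (e a) := funext fun a => (he a).symm
  exact ⟨RingEquiv.piCongrLeft (fun b => Matrix (Fin (g b)) (Fin (g b)) R) e⟩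

/-- Let `R` be an algebraically closed field of characteristic `p ≥ 0`, let `σ ∈ Σ_n` have
cycle type `λ = (λ_1,…,λ_s)` and `τ ∈ Σ_m` have cycle type `μ = (μ_1,…,μ_t)`, with
`p ∤ λ_i` and `p ∤ μ_j` for all `i, j`.  Then `S_n(σ,R) ≅ S_m(τ,R)` as rings if and only if
`m = n` and `ε_λ(x) = ε_μ(x)` in `ℤ[x]`. -/
theorem invariantSubring_ringEquiv_iff
    (R : Type*) [Field R] [IsAlgClosed R] (p : ℕ) [CharP R p]
    {n m s t : ℕ} (σ : Equiv.Perm (Fin n)) (τ : Equiv.Perm (Fin m))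
    (lam : Fin s → ℕ) (mu : Fin t → ℕ)
    (hlpos : ∀ i, 1 ≤ lam i) (hlmono : ∀ i j : Fin s, i ≤ j → lam j ≤ lam i)
    (hlsum : ∑ i, lam i = n) (hlcyc : HasFullCycleType σ lam)
    (hmpos : ∀ j, 1 ≤ mu j) (hmmono : ∀ i j : Fin t, i ≤ j → mu j ≤ mu i)
    (hmsum : ∑ j, mu j = m) (hmcyc : HasFullCycleType τ mu)
    (hlp : ∀ i, ¬ p ∣ lam i) (hmp : ∀ j, ¬ p ∣ mu j) :
    Nonempty ((invariantSubring R σ) ≃+* (invariantSubring R τ)) ↔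
      (m = n ∧ partitionPoly lam = partitionPoly mu) := by
  have := rootE_finite R lam hlpos
  have := rootE_finite R mu hmpos
  let := Fintype.ofFinite (RootE R lam)
  let := Fintype.ofFinite (RootE R mu)
  obtain ⟨φ⟩ := decomposition (R := R) p σ lam hlpos hlcyc hlp
  obtain ⟨ψ⟩ := decomposition (R := R) p τ mu hmpos hmcyc hmp
  have hf := rootMult_pos R lam
  have hg := rootMult_pos R mu
  rw [partition_iff lam mu hlpos hmpos hlsum hmsum]
  constructor
  · rintro ⟨θ⟩ j hj
    obtain ⟨e, he⟩ := exists_equiv_of_fiber_card _ _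
      (fiber_card_of_ringEquiv (R := R) (fun z : RootE R lam => rootMult R lam z)
        (fun z : RootE R mu => rootMult R mu z) hf hg ((φ.symm.trans θ).trans ψ))
    rw [← sum_choose_rootMult R p lam hlp j hj, ← sum_choose_rootMult R p mu hmp j hj]
    exact sum_choose_of_equiv _ _ e he j
  · intro h
    obtain ⟨e, he⟩ := exists_equiv_of_fiber_card _ _
      (fiber_card_of_choose (fun z : RootE R lam => rootMult R lam z)
        (fun z : RootE R mu => rootMult R mu z) hf hg (fun j hj => by
          rw [sum_choose_rootMult R p lam hlp j hj, sum_choose_rootMult R p mu hmp j hj, h j hj]))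
    obtain ⟨θ⟩ := pi_matrix_equiv (R := R) (fun z : RootE R lam => rootMult R lam z)
      (fun z : RootE R mu => rootMult R mu z) e he
    exact ⟨(φ.trans θ).trans ψ.symm⟩
end
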